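/- Fix integers G, K with 1 ≤ G ≤ K. Suppose: r₀ : ℝ^G → ℝ^G is a locally Lipschitz bijection with locally Lipschitz inverse, differentiable with det Dr₀(y) > 0 at Lebesgue-almost every y ∈ ℝ^G; r₁ : ℝ^K → ℝ^G is locally Lipschitz, surjective, and differentiable with rank Dr₁(x) = G at almost every x ∈ ℝ^K; f_U is an admissible density on ℝ^G satisfying the local-maximum condition. Let r̃₀ : ℝ^G → ℝ^G be any locally Lipschitz bijection with det Dr̃₀(y) > 0 at almost every y, and let r̃₁ : ℝ^K → ℝ^G be any locally Lipschitz function. Then there exists an admissible density f_Ũ on ℝ^G such that f_U(r₀(y) + r₁(x))·det Dr₀(y) = f_Ũ(r̃₀(y) + r̃₁(x))·det Dr̃₀(y) for Lebesgue-almost every (y, x) ∈ ℝ^G × ℝ^K, if and only if there exists Q ∈ SO(G) such that r̃₀(y) + r̃₁(x) = Q(r₀(y) + r₁(x)) for all (y, x) ∈ ℝ^G × ℝ^K. -/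

import Mathlib

open MeasureTheory Matrix

noncomputable section

/-- `E n` is Euclidean space `ℝ^n`. -/
abbrev E (n : ℕ) : Type := EuclideanSpace ℝ (Fin n)

/-- Action of a matrix on a Euclidean vector. -/
def mulVecE {m n : ℕ} (A : Matrix (Fin m) (Fin n) ℝ) (x : E n) : E m := WithLp.toLp 2 (A.mulVec x)

/-- An admissible density on `ℝ^G`: continuously differentiable, everywhere strictly positive,
integrating to one, with zero mean and identity covariance (stated componentwise). -/
def AdmissibleDensity {G : ℕ} (ρ : E G → ℝ) : Prop :=
  ContDiff ℝ 1 ρ ∧ (∀ u, 0 < ρ u) ∧ ((∫ u, ρ u) = 1) ∧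
    (∀ i, (∫ u : E G, u i * ρ u) = 0) ∧
    (∀ i j, (∫ u : E G, u i * u j * ρ u) = if i = j then 1 else 0)

/-- The local-maximum condition: `ρ` has a local maximum at some `u₀`, is twice continuously
differentiable in a neighbourhood of `u₀`, and has negative definite Hessian there. -/
def LocalMaxCondition {G : ℕ} (ρ : E G → ℝ) : Prop :=
  ∃ u₀ : E G, IsLocalMax ρ u₀ ∧ ContDiffAt ℝ 2 ρ u₀ ∧
    ∀ v : E G, v ≠ 0 → iteratedFDeriv ℝ 2 ρ u₀ ![v, v] < 0

/-!
Put `h = r̃₀ ∘ r₀⁻¹`. By continuity the almost-everywhere identity becomes the exact functional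
equation `f (z + r x) = c z * g (h z + s x)`, with `r = r₁`, `s = r̃₁` and some positive factor `c`.

Let `u` be the nondegenerate maximum of `f`. Differentiating in `x` where `Dr` is onto shows that
all derivatives of `f` factor through one linear map, and near `u` they fill a neighbourhood of `0`
in the dual, so that map is invertible. Hence, by density of such `x`, the point `h z + s x` is
critical for `g` whenever `z + r x = u`. As `r` is onto, each `z` occurs in such a pair, and there
`c`, a quotient of two functions with vanishing derivative, has derivative zero; so `c` is constant.

A sequence `z → ∞` along which `h z` converges would make translates of the integrable function `f`
converge pointwise to a positive limit, contradicting Fatou's lemma, so `h` is a homeomorphism.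
Since `u` is isolated in its level set, `h (u - r x) + s x` is then locally constant in `x`, which
turns the functional equation into `q (h z - h w) = f u - f (u + (z - w))` for a function `q`.
The right side is a positive definite quadratic form to leading order; with one point of
differentiability of `h`, this makes a linear conjugate of `h` infinitesimally isometric everywhere,
hence an isometry, hence affine by Mazur–Ulam. Comparing moments, its linear part is a rotation.
-/

open Set Filter Topology Asymptotics
open scoped NNReal ContDiff

section Lipschitz

variable {V W : Type*} [NormedAddCommGroup V] [NormedSpace ℝ V]

lemma lipschitzWith_of_eventually_dist_le [PseudoMetricSpace W] {k : V → W} {c : ℝ≥0}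
    (h : ∀ w, ∀ᶠ z in 𝓝 w, dist (k z) (k w) ≤ c * dist z w) : LipschitzWith c k := by
  have hk : Continuous k := continuous_iff_continuousAt.2 fun w =>
    tendsto_iff_dist_tendsto_zero.2 <| squeeze_zero' (.of_forall fun _ => dist_nonneg) (h w) <| by
      simpa using (tendsto_iff_dist_tendsto_zero.1 (tendsto_id (x := 𝓝 w))).const_mul (c : ℝ)
  refine LipschitzWith.of_dist_le_mul fun z w => ?_
  set γ : ℝ → V := fun t => w + t • (z - w) with hγ
  have hγc : Continuous γ := by fun_prop
  have hγd (s t : ℝ) : dist (γ s) (γ t) = |s - t| * dist z w := by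
    simp [hγ, dist_eq_norm, ← sub_smul, norm_smul]
  suffices dist (k (γ 1)) (k w) ≤ c * dist z w * 1 by simpa [hγ] using this
  refine image_le_of_liminf_slope_right_le_deriv_boundary (a := 0) (b := 1)
    (f := fun t => dist (k (γ t)) (k w)) (B := fun t => c * dist z w * t)
    (B' := fun _ => c * dist z w) (by fun_prop) (by simp [hγ]) (by fun_prop)
    (fun x _ => by simpa using ((hasDerivAt_id x).const_mul (c * dist z w)).hasDerivWithinAt)
    (fun x _ b hb => Eventually.frequently ?_) (by simp)
  have hloc : ∀ᶠ t in 𝓝[>] x, dist (k (γ t)) (k (γ x)) ≤ c * dist (γ t) (γ x) :=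
    (hγc.continuousAt.eventually (h (γ x))).filter_mono nhdsWithin_le_nhds
  filter_upwards [hloc, self_mem_nhdsWithin] with t ht (hxt : x < t)
  rw [hγd, abs_of_pos (sub_pos.2 hxt)] at ht
  rw [slope_def_field]
  refine lt_of_le_of_lt ((div_le_iff₀ (sub_pos.2 hxt)).2 ?_) hb
  linarith [dist_triangle (k (γ t)) (k (γ x)) (k w)]

lemma lipschitzWith_one_of_isEquivalent_dist [PseudoMetricSpace W] {k : V → W}
    (h : ∀ w, (fun z => dist (k z) (k w)) ~[𝓝 w] fun z => dist z w) : LipschitzWith 1 k := by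
  have hlip (ε : ℝ≥0) (hε : 0 < ε) : LipschitzWith (1 + ε) k := by
    refine lipschitzWith_of_eventually_dist_le fun w => ?_
    filter_upwards [(h w).isLittleO.def (NNReal.coe_pos.2 hε)] with z hz
    rw [Real.norm_of_nonneg (dist_nonneg : 0 ≤ dist z w)] at hz
    push_cast
    linarith [(abs_le.1 hz).2, Pi.sub_apply (fun z => dist (k z) (k w)) (fun z => dist z w) z]
  refine LipschitzWith.of_dist_le_mul fun z w => ?_
  have hcont : Continuous fun ε : ℝ≥0 => ((1 + ε : ℝ≥0) : ℝ) * dist z w := by fun_prop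
  have hlim := (hcont.tendsto' 0 (dist z w) (by simp)).mono_left (nhdsWithin_le_nhds (s := Ioi 0))
  simpa using ge_of_tendsto hlim (eventually_nhdsWithin_of_forall fun ε hε =>
    (hlip ε hε).dist_le_mul z w)

lemma isometry_of_isEquivalent_dist [NormedAddCommGroup W] [NormedSpace ℝ W] (k : V ≃ₜ W)
    (h : ∀ w, (fun z => dist (k z) (k w)) ~[𝓝 w] fun z => dist z w) : Isometry k := by
  have hsymm (w : W) : (fun z => dist (k.symm z) (k.symm w)) ~[𝓝 w] fun z => dist z w := by
    simpa [Function.comp_def] using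
      ((h (k.symm w)).comp_tendsto k.symm.continuous.continuousAt).symm
  refine Isometry.of_dist_eq fun z w => le_antisymm ?_ ?_
  · simpa using (lipschitzWith_one_of_isEquivalent_dist h).dist_le_mul z w
  · simpa using (lipschitzWith_one_of_isEquivalent_dist hsymm).dist_le_mul (k z) (k w)

end Lipschitz

section Rigidity

variable {V W : Type*} [NormedAddCommGroup V] [NormedSpace ℝ V]
  [NormedAddCommGroup W] [NormedSpace ℝ W]

lemma isEquivalent_dist_of_hasFDerivAt {k : V → W} {L : V →ₗᵢ[ℝ] W} {w : V}
    (hk : HasFDerivAt k L.toContinuousLinearMap w) :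
    (fun z => dist (k z) (k w)) ~[𝓝 w] fun z => dist z w := by
  refine IsBigO.trans_isLittleO (g := fun z => k z - k w - L (z - w))
    (.of_bound' (.of_forall fun z => ?_))
    (hk.isLittleO.norm_right.congr_right fun z => (dist_eq_norm z w).symm)
  simpa [dist_eq_norm, -map_sub] using abs_norm_sub_norm_le (k z - k w) (L (z - w))

/- Differentiability at the single point `w₀` determines the germ of `Q` at `0`, and the germs of
`P` and `Q` in turn make `k` infinitesimally isometric at every point. -/
theorem eq_add_of_isEquivalent_norm_sq {k : V ≃ₜ W} {L : V ≃ₗᵢ[ℝ] W} {w₀ : V}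
    (hk : HasFDerivAt k L.toLinearIsometry.toContinuousLinearMap w₀) {P : V → ℝ} {Q : W → ℝ}
    (hP : P ~[𝓝 0] fun v => ‖v‖ ^ 2) (hPQ : ∀ z w, Q (k z - k w) = P (z - w)) (z : V) :
    k z = L z + k 0 := by
  have hPw (w : V) : (fun z => P (z - w)) ~[𝓝 w] fun z => dist z w ^ 2 := by
    simpa [Function.comp_def, dist_eq_norm] using
      hP.comp_tendsto (tendsto_sub_nhds_zero_iff.2 (tendsto_id (x := 𝓝 w)))
  have hQ : Q ~[𝓝 0] fun v => ‖v‖ ^ 2 := by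
    have hτ : Tendsto (fun v => k.symm (k w₀ + v)) (𝓝 0) (𝓝 w₀) :=
      Continuous.tendsto' (by fun_prop) _ _ (by simp)
    have := (hPw w₀).trans ((isEquivalent_dist_of_hasFDerivAt hk).pow 2).symm
    simpa [Function.comp_def, ← hPQ, dist_eq_norm] using this.comp_tendsto hτ
  have hdist (w : V) : (fun z => dist (k z) (k w)) ~[𝓝 w] fun z => dist z w := by
    have hQw : (fun z => P (z - w)) ~[𝓝 w] fun z => dist (k z) (k w) ^ 2 := by
      simpa [Function.comp_def, hPQ, dist_eq_norm] using
        hQ.comp_tendsto (tendsto_sub_nhds_zero_iff.2 (k.continuous.tendsto w))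
    have hsq := (hQw.symm.trans (hPw w)).rpow (fun z => sq_nonneg (dist z w)) (r := 1 / 2)
    simpa only [Pi.pow_def, ← Real.sqrt_eq_rpow, Real.sqrt_sq dist_nonneg] using hsq
  let e : V ≃ᵃⁱ[ℝ] W :=
    (IsometryEquiv.mk k.toEquiv (isometry_of_isEquivalent_dist k hdist)).toRealAffineIsometryEquiv
  have he (z : V) : k z = e.linearIsometryEquiv z + k 0 := by simpa using! e.map_vadd 0 z
  have hderiv : HasFDerivAt k e.linearIsometryEquiv.toLinearIsometry.toContinuousLinearMap w₀ := by
    rw [funext he]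
    exact (ContinuousLinearMap.hasFDerivAt _).add_const _
  rw [he z]
  exact congrArg (· + k 0) (congrArg (fun A : V →L[ℝ] W => A z) (hderiv.unique hk))

theorem eq_add_of_isEquivalent_norm_comp_sq {H : Type*} [NormedAddCommGroup H] [NormedSpace ℝ H]
    {h : V ≃ₜ W} {A : V ≃L[ℝ] W} {w₀ : V}
    (hA : HasFDerivAt h (A : V →L[ℝ] W) w₀) (S : V ≃L[ℝ] H) {P : V → ℝ} {Q : W → ℝ}
    (hP : P ~[𝓝 0] fun v => ‖S v‖ ^ 2) (hPQ : ∀ z w, Q (h z - h w) = P (z - w)) (z : V) :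
    h z = A z + h 0 := by
  let T : W ≃L[ℝ] H := A.symm.trans S
  let k : H ≃ₜ H := S.symm.toHomeomorph.trans (h.trans T.toHomeomorph)
  have hk : HasFDerivAt k (LinearIsometryEquiv.refl ℝ H).toLinearIsometry.toContinuousLinearMap
      (S w₀) := by
    have hA' : HasFDerivAt h (A : V →L[ℝ] W) (S.symm (S w₀)) := by simpa using hA
    convert! T.hasFDerivAt.comp (S w₀) (hA'.comp (S w₀) S.symm.hasFDerivAt) using 1
    ext v
    simp [T]
  have hP' : (P ∘ S.symm) ~[𝓝 0] fun v => ‖v‖ ^ 2 := by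
    simpa [Function.comp_def] using hP.comp_tendsto (S.symm.continuous.tendsto' 0 0 (by simp))
  have hkz := eq_add_of_isEquivalent_norm_sq hk hP' (Q := Q ∘ T.symm)
    (fun z w => by simp [k, hPQ]) (S z)
  have hTS (v : V) : T.symm (S v) = A v := by simp [T]
  simpa [k, hTS] using congrArg T.symm hkz

end Rigidity

section NondegenerateMax

variable {V F : Type*} [NormedAddCommGroup V] [NormedSpace ℝ V]
  [NormedAddCommGroup F] [NormedSpace ℝ F]

lemma isLittleO_taylor_two {f : V → F} {u : V} (hf : ContDiffAt ℝ 2 f u) :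
    (fun y => f y - f u - fderiv ℝ f u (y - u) -
      (1 / 2 : ℝ) • fderiv ℝ (fderiv ℝ f) u (y - u) (y - u)) =o[𝓝 u] fun y => ‖y - u‖ ^ 2 := by
  set H := fderiv ℝ (fderiv ℝ f) u
  have hsymm : IsSymmSndFDerivAt ℝ f u := hf.isSymmSndFDerivAt (by simp)
  have hH : HasFDerivAt (fderiv ℝ f) H u :=
    ((hf.fderiv_right (m := 1) (by norm_num)).differentiableAt (by norm_num)).hasFDerivAt
  obtain ⟨δ, hδ, hdiff⟩ : ∃ δ > 0, ∀ y ∈ Metric.ball u δ, DifferentiableAt ℝ f y :=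
    Metric.eventually_nhds_iff_ball.1 <|
      (hf.eventually (by simp)).mono fun y hy => hy.differentiableAt (by norm_num)
  have hderiv (y : V) (hy : y ∈ Metric.ball u δ) :
      HasFDerivAt (fun y => f y - fderiv ℝ f u (y - u) - (1 / 2 : ℝ) • H (y - u) (y - u))
        (fderiv ℝ f y - fderiv ℝ f u - H (y - u)) y := by
    have hsub : HasFDerivAt (fun y => y - u) (ContinuousLinearMap.id ℝ V) y :=
      (hasFDerivAt_id y).sub_const u
    have hquad := ((H.hasFDerivAt.comp y hsub).clm_apply hsub).const_smul (1 / 2 : ℝ)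
    convert! ((hdiff y hy).hasFDerivAt.sub ((fderiv ℝ f u).hasFDerivAt.comp y hsub)).sub hquad
      using 1
    ext x
    simp [H, hsymm.eq x (y - u), -map_sub]
    module
  have hball : Metric.ball u δ ∈ 𝓝 u := Metric.ball_mem_nhds u hδ
  have h := (convex_ball u δ).isLittleO_pow_succ (n := 1) (Metric.mem_ball_self hδ)
    (fun y hy => (hderiv y hy).hasFDerivWithinAt)
    (by simpa [nhdsWithin_eq_nhds.2 hball] using hH.isLittleO.norm_right)
  rw [nhdsWithin_eq_nhds.2 hball] at h
  exact h.congr_left fun y => by simp; abel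

lemma exists_norm_sq_eq_of_posDef [FiniteDimensional ℝ V] {q : QuadraticForm ℝ V}
    (hq : q.PosDef) :
    ∃ S : V ≃L[ℝ] EuclideanSpace ℝ (Fin (Module.finrank ℝ V)), ∀ v, ‖S v‖ ^ 2 = q v := by
  obtain ⟨w, hw, ⟨e⟩⟩ := QuadraticForm.equivalent_one_zero_neg_one_weighted_sum_squared q
  have he (v : V) : ∑ i, w i * (e v i * e v i) = q v := by
    simpa only [QuadraticMap.weightedSumSquares_apply, smul_eq_mul] using! e.map_app v
  have hw1 (i) : w i = 1 := by
    have hpos := hq (e.toLinearEquiv.symm (Pi.single i 1)) (by simp)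
    have : e (e.toLinearEquiv.symm (Pi.single i 1)) = Pi.single i 1 :=
      e.toLinearEquiv.apply_symm_apply _
    simp only [← he, this, Pi.single_apply] at hpos
    rcases hw i with h | h | h <;> simp_all
    norm_num at hpos
  refine ⟨(e.toLinearEquiv.trans (WithLp.linearEquiv 2 ℝ _).symm).toContinuousLinearEquiv,
    fun v => ?_⟩
  rw [EuclideanSpace.norm_sq_eq, ← he]
  simp [hw1, sq]

/-- A nondegenerate local maximum of `f` at `u`, encoded by the second-order sufficient condition:
`u` is a critical point at which the Hessian, written as `fderiv ℝ (fderiv ℝ f) u`, is negative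
definite. -/
structure IsNondegenerateMax (f : V → ℝ) (u : V) : Prop where
  contDiffAt : ContDiffAt ℝ 2 f u
  fderiv_eq_zero : fderiv ℝ f u = 0
  hessian_neg : ∀ v, v ≠ 0 → fderiv ℝ (fderiv ℝ f) u v v < 0

namespace IsNondegenerateMax

variable [FiniteDimensional ℝ V] {f : V → ℝ} {u : V}

lemma exists_isEquivalent_norm_sq (hf : IsNondegenerateMax f u) :
    ∃ S : V ≃L[ℝ] EuclideanSpace ℝ (Fin (Module.finrank ℝ V)),
      (fun v => f u - f (u + v)) ~[𝓝 0] fun v => ‖S v‖ ^ 2 := by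
  set H := fderiv ℝ (fderiv ℝ f) u
  obtain ⟨S, hS⟩ := exists_norm_sq_eq_of_posDef
    (q := (-(1 / 2 : ℝ) • H).toBilinForm.toQuadraticMap) fun v hv => by
      have := hf.hessian_neg v hv
      simp [H]
      linarith
  have hadd : Tendsto (fun v => u + v) (𝓝 0) (𝓝 u) :=
    Continuous.tendsto' (by fun_prop) _ _ (by simp)
  have htaylor := (isLittleO_taylor_two hf.contDiffAt).comp_tendsto hadd
  have hbig : (fun v : V => ‖v‖ ^ 2) =O[𝓝 0] fun v => ‖S v‖ ^ 2 :=
    (S.isBigO_comp_rev (fun v : V => v) (𝓝 0)).norm_norm.pow 2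
  refine ⟨S, IsLittleO.congr_left (f₁ := fun v => -(f (u + v) - f u - (1 / 2) * H v v)) ?_ ?_⟩
  · refine IsLittleO.neg_left ?_
    simpa only [Function.comp_def, hf.fderiv_eq_zero, add_sub_cancel_left, sub_zero,
      _root_.zero_apply, smul_eq_mul] using
      htaylor.trans_isBigO (by simpa [Function.comp_def] using hbig)
  · intro v
    simp [hS]
    ring

lemma eventually_eq_of_apply_eq (hf : IsNondegenerateMax f u) :
    ∀ᶠ y in 𝓝 u, f y = f u → y = u := by
  obtain ⟨S, hS⟩ := hf.exists_isEquivalent_norm_sq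
  have hsub : Tendsto (fun y => y - u) (𝓝 u) (𝓝 0) := tendsto_sub_nhds_zero_iff.2 tendsto_id
  filter_upwards [hsub.eventually (hS.isBigO_symm.eq_zero_imp)] with y hy hfy
  simpa [hfy, sub_eq_zero] using hy

lemma hessian_range_eq_top (hf : IsNondegenerateMax f u) :
    (fderiv ℝ (fderiv ℝ f) u).range = ⊤ := by
  have hinj : Function.Injective (fderiv ℝ (fderiv ℝ f) u) :=
    (injective_iff_map_eq_zero _).2 fun v hv => by
      by_contra hne
      simpa [hv] using hf.hessian_neg v hne
  refine LinearMap.range_eq_top.2 <|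
    (LinearMap.injective_iff_surjective_of_finrank_eq_finrank ?_).1 hinj
  rw [← (LinearMap.toContinuousLinearMap (𝕜 := ℝ) (E := V) (F' := ℝ)).finrank_eq]
  exact Subspace.dual_finrank_eq.symm

lemma submodule_eq_top (hf : IsNondegenerateMax f u) {p : Submodule ℝ (V →L[ℝ] ℝ)}
    (hp : ∀ v, fderiv ℝ f v ∈ p) : p = ⊤ := by
  have hstrict : HasStrictFDerivAt (fderiv ℝ f) (fderiv ℝ (fderiv ℝ f) u) u :=
    (hf.contDiffAt.fderiv_right (m := 1) (by norm_num)).hasStrictFDerivAt (by norm_num)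
  refine p.eq_top_of_nonempty_interior' ⟨0, mem_interior_iff_mem_nhds.2 ?_⟩
  rw [← hf.fderiv_eq_zero, ← hstrict.map_nhds_eq_of_surj hf.hessian_range_eq_top]
  exact mem_map.2 (univ_mem' hp)

end IsNondegenerateMax

end NondegenerateMax

section Translates

variable {V F : Type*} [NormedAddCommGroup V] [ProperSpace V] [MeasurableSpace V] [BorelSpace V]
  [NormedAddCommGroup F] {μ : Measure V} [μ.IsAddLeftInvariant] {f : V → F}

instance isCountablyGenerated_cocompact {V : Type*} [SeminormedAddGroup V] [ProperSpace V] :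
    (cocompact V).IsCountablyGenerated := by
  rw [← Metric.cobounded_eq_cocompact, ← comap_norm_atTop]
  infer_instance

/- The weight makes the integrand bounded and vanishing at infinity for the finite measure with
density `‖f‖ₑ`, and, being nowhere zero, it is invisible to almost-everywhere conclusions. -/
lemma tendsto_lintegral_translate_cocompact (hf : Integrable f μ) :
    Tendsto (fun z => ∫⁻ v, ‖f (z + v)‖ₑ * (1 + ‖v‖ₑ)⁻¹ ∂μ) (cocompact V) (𝓝 0) := by
  have hdens (z : V) : ∫⁻ v, ‖f (z + v)‖ₑ * (1 + ‖v‖ₑ)⁻¹ ∂μ =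
      ∫⁻ v, (1 + ‖-z + v‖ₑ)⁻¹ ∂μ.withDensity fun v => ‖f v‖ₑ := by
    rw [lintegral_withDensity_eq_lintegral_mul₀ hf.aestronglyMeasurable.enorm (by fun_prop),
      ← lintegral_add_left_eq_self (_ * _) z]
    simp
  have := isFiniteMeasure_withDensity hf.hasFiniteIntegral.ne
  simp_rw [hdens]
  rw [← lintegral_zero (μ := μ.withDensity fun v => ‖f v‖ₑ)]
  refine tendsto_lintegral_filter_of_dominated_convergence (fun _ => 1)
    (.of_forall fun z => by fun_prop) (.of_forall fun z => .of_forall fun v => by simp)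
    (by simpa using hf.hasFiniteIntegral.ne) (.of_forall fun v => ?_)
  have hembed := ((Homeomorph.neg V).trans (Homeomorph.addRight v)).isClosedEmbedding
  have hnorm : Tendsto (fun z : V => ‖-z + v‖ₑ) (cocompact V) (𝓝 ⊤) := by
    simpa [Function.comp_def] using ENNReal.tendsto_ofReal_atTop.comp
      (tendsto_norm_cocompact_atTop.comp hembed.tendsto_cocompact)
  simpa using (hnorm.const_add 1).inv

lemma ae_eq_zero_of_tendsto_translate {φ : V → F} (hf : Integrable f μ) {l : Filter V} [l.NeBot]
    [l.IsCountablyGenerated] (hl : l ≤ cocompact V)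
    (hφ : ∀ v, Tendsto (fun z => f (z + v)) l (𝓝 (φ v))) : φ =ᵐ[μ] 0 := by
  have hmeas (z : V) : AEMeasurable (fun v => ‖f (z + v)‖ₑ * (1 + ‖v‖ₑ)⁻¹) μ :=
    (hf.comp_add_left z).aestronglyMeasurable.enorm.mul (by fun_prop)
  have hlim (v : V) :
      Tendsto (fun z => ‖f (z + v)‖ₑ * (1 + ‖v‖ₑ)⁻¹) l (𝓝 (‖φ v‖ₑ * (1 + ‖v‖ₑ)⁻¹)) :=
    ENNReal.Tendsto.mul_const (hφ v).enorm (.inr (by simp))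
  have hzero : ∫⁻ v, ‖φ v‖ₑ * (1 + ‖v‖ₑ)⁻¹ ∂μ = 0 := le_bot_iff.1 <| calc
    _ = ∫⁻ v, liminf (fun z => ‖f (z + v)‖ₑ * (1 + ‖v‖ₑ)⁻¹) l ∂μ := by
      simp_rw [(hlim _).liminf_eq]
    _ ≤ liminf (fun z => ∫⁻ v, ‖f (z + v)‖ₑ * (1 + ‖v‖ₑ)⁻¹ ∂μ) l := lintegral_liminf_le' hmeas
    _ = 0 := ((tendsto_lintegral_translate_cocompact hf).mono_left hl).liminf_eq
  filter_upwards [(lintegral_eq_zero_iff' (aemeasurable_of_tendsto_metrizable_ae l hmeas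
    (.of_forall hlim))).1 hzero] with v hv
  simpa using hv

end Translates

section FunctionalEquationTopological

variable {V X : Type*} {h : V → V} {r s : X → V}

lemma isProperMap_of_separable {F : Type*} [NormedAddCommGroup V] [ProperSpace V]
    [MeasurableSpace V] [BorelSpace V] [NormedAddCommGroup F] {μ : Measure V}
    [μ.IsAddLeftInvariant] [NeZero μ] {f g : V → F}
    (hfe : ∀ z x, f (z + r x) = g (h z + s x)) (hf : Integrable f μ) (hg : Continuous g)
    (hg0 : ∀ v, g v ≠ 0) (hh : Continuous h) (hr : Function.Surjective r) : IsProperMap h := by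
  refine isProperMap_iff_ultrafilter_of_t2.2 ⟨hh, fun 𝒰 y hy => ?_⟩
  by_contra! hno
  have h𝒰 : (𝒰 : Filter V) ≤ comap h (𝓝 y) ⊓ cocompact V := by
    refine le_inf (tendsto_iff_comap.1 hy) (hasBasis_cocompact.ge_iff.2 fun K hK => ?_)
    by_contra hmem
    obtain ⟨x, -, hx⟩ := hK.ultrafilter_le_nhds 𝒰
      (le_principal_iff.2 (Ultrafilter.compl_notMem_iff.1 hmem))
    exact hno x hx
  have : (comap h (𝓝 y) ⊓ cocompact V).NeBot := 𝒰.neBot.mono h𝒰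
  choose x hx using hr
  have hlim (v : V) : Tendsto (fun z => f (z + v)) (comap h (𝓝 y) ⊓ cocompact V)
      (𝓝 (g (y + s (x v)))) := by
    have hhy : Tendsto h (comap h (𝓝 y) ⊓ cocompact V) (𝓝 y) := tendsto_comap.mono_left inf_le_left
    simpa [← hfe, hx, Function.comp_def] using
      (hg.tendsto (y + s (x v))).comp (hhy.add_const (s (x v)))
  obtain ⟨v, hv⟩ := (ae_eq_zero_of_tendsto_translate hf inf_le_right hlim).exists
  exact hg0 _ hv

lemma add_eq_add_of_separable {α : Type*} [AddCommGroup V] [TopologicalSpace V]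
    [IsTopologicalAddGroup V] [TopologicalSpace X] [PreconnectedSpace X] {h : V ≃ₜ V}
    {f g : V → α} {u : V}
    (hfe : ∀ z x, f (z + r x) = g (h z + s x)) (hu : ∀ᶠ y in 𝓝 u, f y = f u → y = u)
    (hr : Continuous r) (hs : Continuous s) (x y : X) :
    h (u - r x) + s x = h (u - r y) + s y := by
  suffices IsLocallyConstant fun x => h (u - r x) + s x from
    this.apply_eq_of_preconnectedSpace x y
  refine (IsLocallyConstant.iff_eventually_eq _).2 fun x => ?_
  set κ := h (u - r x) + s x with hκ
  have hlim : Tendsto (fun y => h.symm (κ - s y) + r y) (𝓝 x) (𝓝 u) :=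
    Continuous.tendsto' (by fun_prop) _ _ (by simp [hκ])
  filter_upwards [hlim.eventually hu] with y hy
  have hfu : f (h.symm (κ - s y) + r y) = f u := by
    rw [hfe, h.apply_symm_apply, sub_add_cancel, hκ, ← hfe, sub_add_cancel]
  rw [← hy hfu]
  simp

end FunctionalEquationTopological

section FunctionalEquation

variable {V X : Type*} [NormedAddCommGroup V] [NormedSpace ℝ V]
  [NormedAddCommGroup X] [NormedSpace ℝ X]
  {f g c : V → ℝ} {h : V → V} {r s : X → V} {u : V}

lemma hasFDerivAt_zero_comp_of_locallyLipschitz {W F : Type*} [NormedAddCommGroup W]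
    [NormedSpace ℝ W] [NormedAddCommGroup F] [NormedSpace ℝ F] {φ : W → F} {k : V → W} {z : V}
    (hφ : HasFDerivAt φ (0 : W →L[ℝ] F) (k z)) (hk : LocallyLipschitz k) :
    HasFDerivAt (fun z => φ (k z)) (0 : V →L[ℝ] F) z := by
  obtain ⟨K, t, ht, hKt⟩ := hk z
  have hbig : (fun y => k y - k z) =O[𝓝 z] fun y => y - z := .of_bound K <| by
    filter_upwards [ht] with y hy
    simpa [dist_eq_norm] using hKt.dist_le_mul y hy z (mem_of_mem_nhds ht)
  refine .of_isLittleO <| ?_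
  simpa [Function.comp_def] using
    (hφ.isLittleO.comp_tendsto hk.continuous.continuousAt).trans_isBigO hbig

lemma fderiv_comp_eq_of_separable (hfe : ∀ z x, f (z + r x) = c z * g (h z + s x))
    (hf : Differentiable ℝ f) (hg : Differentiable ℝ g) {x : X} (hr : DifferentiableAt ℝ r x)
    (hs : DifferentiableAt ℝ s x) (z : V) :
    (fderiv ℝ f (z + r x)).comp (fderiv ℝ r x) =
      c z • (fderiv ℝ g (h z + s x)).comp (fderiv ℝ s x) := by
  have hleft := (hf (z + r x)).hasFDerivAt.comp x (hr.hasFDerivAt.const_add z)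
  have hright := ((hg (h z + s x)).hasFDerivAt.comp x
    (hs.hasFDerivAt.const_add (h z))).const_smul (c z)
  exact hleft.unique (hright.congr_of_eventuallyEq (.of_forall fun x => hfe z x))

lemma IsNondegenerateMax.fderiv_eq_zero_of_separable [FiniteDimensional ℝ V]
    (hu : IsNondegenerateMax f u) (hfe : ∀ z x, f (z + r x) = c z * g (h z + s x))
    (hc : ∀ z, c z ≠ 0) (hf : Differentiable ℝ f) (hg : Differentiable ℝ g) {x : X}
    (hr : DifferentiableAt ℝ r x) (hrange : (fderiv ℝ r x).range = ⊤)
    (hs : DifferentiableAt ℝ s x) : fderiv ℝ g (h (u - r x) + s x) = 0 := by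
  obtain ⟨R, hR⟩ := (fderiv ℝ r x).toLinearMap.exists_rightInverse_of_surjective hrange
  let B : V →L[ℝ] V := (fderiv ℝ s x).comp R.toContinuousLinearMap
  have hfB (v : V) : fderiv ℝ f v = (c (v - r x) • fderiv ℝ g (h (v - r x) + s x)).comp B := by
    ext w
    have hRw : fderiv ℝ r x (R w) = w := LinearMap.congr_fun hR w
    simpa [B, hRw] using
      congrArg (fun L => L (R w)) (fderiv_comp_eq_of_separable hfe hf hg hr hs (v - r x))
  let T : (V →L[ℝ] ℝ) →ₗ[ℝ] (V →L[ℝ] ℝ) := (B.precomp ℝ).toLinearMap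
  -- The derivatives of `f` span the dual, and each of them factors through `B`.
  have hT : T.range = ⊤ := hu.submodule_eq_top fun v => ⟨_, (hfB v).symm⟩
  have hinj : Function.Injective T :=
    LinearMap.injective_iff_surjective.2 (LinearMap.range_eq_top.1 hT)
  have hzero : c (u - r x) • fderiv ℝ g (h (u - r x) + s x) = 0 :=
    hinj <| by simpa [T] using (hfB u).symm.trans hu.fderiv_eq_zero
  exact (smul_eq_zero.1 hzero).resolve_left (hc _)

lemma IsNondegenerateMax.exists_eq_const_of_separable [FiniteDimensional ℝ V]
    (hu : IsNondegenerateMax f u) (hfe : ∀ z x, f (z + r x) = c z * g (h z + s x))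
    (hf : Differentiable ℝ f) (hg : ContDiff ℝ 1 g) (hfpos : ∀ v, 0 < f v) (hgpos : ∀ v, 0 < g v)
    (hh : LocallyLipschitz h) (hr : Continuous r) (hrsurj : Function.Surjective r)
    (hs : Continuous s)
    (hdense : Dense {x | DifferentiableAt ℝ r x ∧ (fderiv ℝ r x).range = ⊤ ∧
      DifferentiableAt ℝ s x}) : ∃ C > 0, ∀ z, c z = C := by
  have hc (x : X) : c = fun z => f (z + r x) / g (h z + s x) :=
    funext fun z => by rw [hfe, mul_div_cancel_right₀ _ (hgpos _).ne']
  have hcpos (z : V) : 0 < c z := by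
    rw [hc 0]
    exact div_pos (hfpos _) (hgpos _)
  have hcrit (x : X) : fderiv ℝ g (h (u - r x) + s x) = 0 := by
    have hcont : Continuous fun x => fderiv ℝ g (h (u - r x) + s x) :=
      (hg.continuous_fderiv one_ne_zero).comp
        ((hh.continuous.comp (continuous_const.sub hr)).add hs)
    refine congrFun (hcont.ext_on hdense continuous_const fun x hx => ?_) x
    exact hu.fderiv_eq_zero_of_separable hfe (fun z => (hcpos z).ne') hf
      (hg.differentiable one_ne_zero) hx.1 hx.2.1 hx.2.2
  have hderiv (z : V) : HasFDerivAt c (0 : V →L[ℝ] ℝ) z := by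
    obtain ⟨x, hx⟩ := hrsurj (u - z)
    obtain rfl : z = u - r x := by rw [hx, sub_sub_cancel]
    have hnum : HasFDerivAt (fun z => f (z + r x)) (0 : V →L[ℝ] ℝ) (u - r x) := by
      simpa [hu.fderiv_eq_zero] using
        (hasFDerivAt_comp_add_right (r x)).2 (hf (u - r x + r x)).hasFDerivAt
    have hden : HasFDerivAt (fun z => g (h z + s x)) (0 : V →L[ℝ] ℝ) (u - r x) := by
      refine hasFDerivAt_zero_comp_of_locallyLipschitz (k := fun z => h z + s x) ?_ ?_
      · simpa [hcrit] using (hg.differentiable one_ne_zero (h (u - r x) + s x)).hasFDerivAt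
      · exact hh.add (LocallyLipschitz.const _)
    have hinv := (hasDerivAt_inv (hgpos (h (u - r x) + s x)).ne').comp_hasFDerivAt (u - r x) hden
    simpa [hc x, div_eq_mul_inv] using hnum.fun_mul hinv
  exact ⟨c 0, hcpos 0, fun z => is_const_of_fderiv_eq_zero (fun z => (hderiv z).differentiableAt)
    (fun z => (hderiv z).fderiv) z 0⟩

theorem IsNondegenerateMax.exists_eq_affine_of_separable [MeasurableSpace V] [BorelSpace V]
    [FiniteDimensional ℝ V] {μ : Measure V} [μ.IsAddLeftInvariant] [NeZero μ]
    (hu : IsNondegenerateMax f u) (hfe : ∀ z x, f (z + r x) = c z * g (h z + s x))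
    (hf : Differentiable ℝ f) (hfint : Integrable f μ) (hfpos : ∀ v, 0 < f v)
    (hg : ContDiff ℝ 1 g) (hgpos : ∀ v, 0 < g v)
    (hh : LocallyLipschitz h) (hhbij : Function.Bijective h) {A : V ≃L[ℝ] V} {w : V}
    (hA : HasFDerivAt h (A : V →L[ℝ] V) w) (hr : Continuous r) (hrsurj : Function.Surjective r)
    (hs : Continuous s)
    (hdense : Dense {x | DifferentiableAt ℝ r x ∧ (fderiv ℝ r x).range = ⊤ ∧
      DifferentiableAt ℝ s x}) :
    ∃ (C : ℝ) (d : V), (∀ z x, h z + s x = A (z + r x) + d) ∧ ∀ v, f v = C * g (A v + d) := by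
  obtain ⟨C, hC0, hC⟩ :=
    hu.exists_eq_const_of_separable hfe hf hg hfpos hgpos hh hr hrsurj hs hdense
  simp only [hC] at hfe
  have hproper : IsProperMap h := isProperMap_of_separable (g := fun v => C * g v) hfe hfint
    (by fun_prop) (fun v => (mul_pos hC0 (hgpos v)).ne') hh.continuous hrsurj
  let e : V ≃ₜ V := (Equiv.ofBijective h hhbij).toHomeomorphOfContinuousClosed hh.continuous
    hproper.isClosedMap
  obtain ⟨κ, hκ⟩ : ∃ κ, ∀ x, h (u - r x) + s x = κ :=
    ⟨_, fun x => add_eq_add_of_separable (h := e) (g := fun v => C * g v) hfe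
      hu.eventually_eq_of_apply_eq hr hs x 0⟩
  have hPQ (z w : V) : f u - C * g (κ + (h z - h w)) = f u - f (u + (z - w)) := by
    obtain ⟨x, hx⟩ := hrsurj (u - w)
    have hfx := hfe z x
    rw [eq_sub_of_add_eq' (hκ x), hx, sub_sub_cancel] at hfx
    rw [show u + (z - w) = z + (u - w) by abel, hfx, add_sub_left_comm]
  obtain ⟨S, hS⟩ := hu.exists_isEquivalent_norm_sq
  have haff (z : V) : h z = A z + h 0 := eq_add_of_isEquivalent_norm_comp_sq (h := e)
    (Q := fun v => f u - C * g (κ + v)) hA S hS hPQ z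
  have hsum (z : V) (x : X) : h z + s x = A (z + r x) + (κ - A u) := by
    rw [← hκ x, haff z, haff (u - r x), map_sub, map_add]
    abel
  refine ⟨C, κ - A u, hsum, fun v => ?_⟩
  obtain ⟨x, hx⟩ := hrsurj v
  simpa [hsum, hx] using hfe 0 x

end FunctionalEquation

section AlmostEverywhere

lemma ae_differentiableAt_of_locallyLipschitz {V W : Type*} [NormedAddCommGroup V]
    [NormedSpace ℝ V] [FiniteDimensional ℝ V] [MeasurableSpace V] [BorelSpace V]
    [NormedAddCommGroup W] [NormedSpace ℝ W] [FiniteDimensional ℝ W] (μ : Measure V)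
    [μ.IsAddHaarMeasure] {k : V → W} (hk : LocallyLipschitz k) :
    ∀ᵐ x ∂μ, DifferentiableAt ℝ k x := by
  choose C t ht hC using hk
  obtain ⟨s, hs, hcover⟩ :=
    TopologicalSpace.countable_cover_nhds fun x => interior_mem_nhds.2 (ht x)
  have hae : ∀ x ∈ s, ∀ᵐ y ∂μ, y ∈ t x → DifferentiableWithinAt ℝ k (t x) y := fun x _ =>
    (hC x).ae_differentiableWithinAt_of_mem
  filter_upwards [(ae_ball_iff hs).2 hae] with y hy
  obtain ⟨x, hx, hyx⟩ := mem_iUnion₂.1 (hcover ▸ mem_univ y)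
  exact (hy x hx (interior_subset hyx)).differentiableAt (mem_interior_iff_mem_nhds.1 hyx)

lemma mul_eq_mul_of_ae_prod_mul_eq {Y X : Type*} [TopologicalSpace Y] [MeasurableSpace Y]
    [TopologicalSpace X] [MeasurableSpace X] {ν : Measure Y} {μ : Measure X}
    [ν.IsOpenPosMeasure] [μ.IsOpenPosMeasure] [SFinite μ] {a b : Y → ℝ} {p q : Y → X → ℝ}
    (hp : Continuous ↿p) (hq : Continuous ↿q) (ha : ∀ᵐ y ∂ν, a y ≠ 0) (hb : ∀ᵐ y ∂ν, b y ≠ 0)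
    (hpq : ∀ᵐ w ∂ν.prod μ, p w.1 w.2 * a w.1 = q w.1 w.2 * b w.1) (y : Y) (x x' : X) :
    p y x * q y x' = p y x' * q y x := by
  have hslice : ∀ᵐ y ∂ν, ∀ x, p y x * a y = q y x * b y := by
    filter_upwards [Measure.ae_ae_of_ae_prod hpq] with y hy
    exact congrFun <| (Continuous.ae_eq_iff_eq μ (f := fun x => p y x * a y)
      (g := fun x => q y x * b y) (by fun_prop) (by fun_prop)).1 hy
  refine congrFun ((Continuous.ae_eq_iff_eq ν (f := fun y => p y x * q y x')
    (g := fun y => p y x' * q y x) (by fun_prop) (by fun_prop)).1 ?_) y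
  filter_upwards [hslice, ha, hb] with y hy hay hby
  refine mul_right_cancel₀ (mul_ne_zero hay hby) ?_
  linear_combination q y x' * b y * hy x - q y x * b y * hy x'

lemma separable_of_ae_prod_mul_eq {Y X V : Type*} [TopologicalSpace Y] [MeasurableSpace Y]
    [TopologicalSpace X] [MeasurableSpace X] [Add V] [TopologicalSpace V] [ContinuousAdd V]
    {ν : Measure Y} {μ : Measure X} [ν.IsOpenPosMeasure] [μ.IsOpenPosMeasure] [SFinite μ]
    {k l : Y → V} {r s : X → V} {f g : V → ℝ} {a b : Y → ℝ} (hk : Continuous k)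
    (hl : Continuous l) (hr : Continuous r) (hs : Continuous s) (hf : Continuous f)
    (hg : Continuous g) (hg0 : ∀ v, g v ≠ 0) (ha : ∀ᵐ y ∂ν, a y ≠ 0) (hb : ∀ᵐ y ∂ν, b y ≠ 0)
    (hfg : ∀ᵐ w ∂ν.prod μ, f (k w.1 + r w.2) * a w.1 = g (l w.1 + s w.2) * b w.1)
    {σ : V → Y} (hσ : Function.RightInverse σ k) (x₀ : X) (z : V) (x : X) :
    f (z + r x) = f (z + r x₀) / g ((l ∘ σ) z + s x₀) * g ((l ∘ σ) z + s x) := by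
  have hcross := mul_eq_mul_of_ae_prod_mul_eq (p := fun y x => f (k y + r x))
    (q := fun y x => g (l y + s x)) (by fun_prop) (by fun_prop) ha hb hfg (σ z) x x₀
  rw [hσ z] at hcross
  rw [div_mul_eq_mul_div, eq_div_iff (hg0 _)]
  exact hcross

end AlmostEverywhere

section LinearAlgebra

lemma range_eq_top_of_rank_eq_finrank {K V W : Type*} [DivisionRing K] [AddCommGroup V]
    [Module K V] [AddCommGroup W] [Module K W] [FiniteDimensional K W] {L : V →ₗ[K] W}
    (hL : LinearMap.rank L = Module.finrank K W) : L.range = ⊤ :=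
  Submodule.eq_top_of_finrank_eq (Module.finrank_eq_of_rank_eq hL)

lemma det_fderiv_comp_add {V : Type*} [NormedAddCommGroup V] [NormedSpace ℝ V]
    (A : V ≃L[ℝ] V) (k : V → V) (e y : V) :
    (fderiv ℝ (fun y => A (k y) + e) y).det = (A : V →L[ℝ] V).det * (fderiv ℝ k y).det := by
  rw [fderiv_add_const]
  exact (congrArg ContinuousLinearMap.det A.comp_fderiv).trans (LinearMap.det_comp _ _)

variable {V : Type*} [NormedAddCommGroup V] [NormedSpace ℝ V] [FiniteDimensional ℝ V]

lemma exists_hasFDerivAt_comp_invFun {r k : V → V} {y : V} (hr : Function.Bijective r)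
    (hinv : Continuous (Function.invFun r)) (hry : DifferentiableAt ℝ r y)
    (hrdet : 0 < (fderiv ℝ r y).det) (hky : DifferentiableAt ℝ k y)
    (hkdet : 0 < (fderiv ℝ k y).det) :
    ∃ A : V ≃L[ℝ] V, 0 < (A : V →L[ℝ] V).det ∧
      HasFDerivAt (k ∘ Function.invFun r) (A : V →L[ℝ] V) (r y) := by
  let R := (fderiv ℝ r y).toContinuousLinearEquivOfDetNeZero hrdet.ne'
  let T := (fderiv ℝ k y).toContinuousLinearEquivOfDetNeZero hkdet.ne'
  have hy : Function.invFun r (r y) = y := Function.leftInverse_invFun hr.1 y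
  have hR : HasFDerivAt (Function.invFun r) (R.symm : V →L[ℝ] V) (r y) := by
    refine HasFDerivAt.of_local_left_inverse hinv.continuousAt ?_
      (.of_forall (Function.rightInverse_invFun hr.2))
    simpa [R, hy] using hry.hasFDerivAt
  have hT : HasFDerivAt k (T : V →L[ℝ] V) (Function.invFun r (r y)) := by
    simpa [T, hy] using hky.hasFDerivAt
  refine ⟨R.symm.trans T, ?_, hT.comp (r y) hR⟩
  calc 0 < (fderiv ℝ k y).det * (fderiv ℝ r y).det⁻¹ := mul_pos hkdet (inv_pos.2 hrdet)
    _ = (T : V →L[ℝ] V).det * (R.symm : V →L[ℝ] V).det := by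
      simp [T, R, ContinuousLinearEquiv.det_coe_symm]
    _ = (R.symm.trans T : V →L[ℝ] V).det := (LinearMap.det_comp _ _).symm

lemma integral_eq_abs_det_mul_integral_comp [MeasurableSpace V] [BorelSpace V] {μ : Measure V}
    [μ.IsAddHaarMeasure] {A : V →L[ℝ] V} (hA : A.det ≠ 0) (d : V) (φ : V → ℝ) :
    ∫ v, φ v ∂μ = |A.det| * ∫ v, φ (A v + d) ∂μ := by
  let e : V ≃ₜ V := (A.toContinuousLinearEquivOfDetNeZero hA).toHomeomorph
  have hmap : Measure.map e μ = ENNReal.ofReal |A.det⁻¹| • μ :=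
    Measure.map_linearMap_addHaar_eq_smul_addHaar μ hA
  have hcomp : ∫ v, φ (A v + d) ∂μ = |A.det⁻¹| * ∫ v, φ v ∂μ := by
    rw [← integral_add_right_eq_self φ d]
    calc _ = ∫ v, φ (v + d) ∂Measure.map e μ :=
          (e.measurableEmbedding.integral_map fun v => φ (v + d)).symm
      _ = |A.det⁻¹| * ∫ v, φ (v + d) ∂μ := by simp [hmap, integral_smul_measure]
  rw [hcomp, abs_inv, mul_inv_cancel_left₀ (abs_ne_zero.2 hA)]

lemma integral_mul_eq_of_eq_abs_det_mul_comp [MeasurableSpace V] [BorelSpace V] {μ : Measure V}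
    [μ.IsAddHaarMeasure] {A : V →L[ℝ] V} (hA : A.det ≠ 0) {d : V} {f g : V → ℝ}
    (hfg : ∀ v, f v = |A.det| * g (A v + d)) (φ : V → ℝ) :
    ∫ v, φ v * g v ∂μ = ∫ v, φ (A v + d) * f v ∂μ := by
  rw [integral_eq_abs_det_mul_integral_comp hA d, ← integral_const_mul]
  simp only [hfg, mul_left_comm]

lemma det_mul_self_of_mul_transpose_self {n : Type*} [Fintype n] [DecidableEq n]
    {Q : Matrix n n ℝ} (hQ : Q * Qᵀ = 1) : Q.det * Q.det = 1 := by
  simpa using congrArg det hQ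

lemma det_toEuclideanCLM {n : ℕ} (Q : Matrix (Fin n) (Fin n) ℝ) :
    (toEuclideanCLM (𝕜 := ℝ) Q).det = Q.det := by
  change LinearMap.det (toEuclideanCLM (𝕜 := ℝ) Q).toLinearMap = _
  rw [coe_toEuclideanCLM_eq_toEuclideanLin, toEuclideanLin_eq_toLin_orthonormal,
    LinearMap.det_toLin]

lemma mulVecE_transpose_mulVecE {n : ℕ} {Q : Matrix (Fin n) (Fin n) ℝ} (hQ : Q * Qᵀ = 1)
    (v : E n) : mulVecE Qᵀ (mulVecE Q v) = v := by
  simp [mulVecE, mulVec_mulVec, mul_eq_one_comm.1 hQ]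

end LinearAlgebra

namespace AdmissibleDensity

variable {G : ℕ} {ρ : E G → ℝ}

lemma integrable (hρ : AdmissibleDensity ρ) : Integrable ρ :=
  .of_integral_ne_zero (by simp [hρ.2.2.1])

lemma integrable_apply_mul_apply_mul (hρ : AdmissibleDensity ρ) (i j : Fin G) :
    Integrable fun u : E G => u i * u j * ρ u := by
  have hsq (i : Fin G) : Integrable fun u : E G => u i * u i * ρ u :=
    .of_integral_ne_zero (by simp [hρ.2.2.2.2])
  have hcont : Continuous ρ := hρ.1.continuous
  refine ((hsq i).add (hsq j)).mono' (by fun_prop) (.of_forall fun u => ?_)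
  rw [norm_mul, Real.norm_of_nonneg (hρ.2.1 u).le, Pi.add_apply, ← add_mul]
  refine mul_le_mul_of_nonneg_right (abs_le.2 ?_) (hρ.2.1 u).le
  constructor <;> nlinarith [sq_nonneg (u i - u j), sq_nonneg (u i + u j)]

lemma integrable_apply_mul (hρ : AdmissibleDensity ρ) (i : Fin G) :
    Integrable fun u : E G => u i * ρ u := by
  have hcont : Continuous ρ := hρ.1.continuous
  refine (hρ.integrable.add (hρ.integrable_apply_mul_apply_mul i i)).mono' (by fun_prop)
    (.of_forall fun u => ?_)
  rw [norm_mul, Real.norm_of_nonneg (hρ.2.1 u).le, Pi.add_apply, ← one_add_mul]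
  refine mul_le_mul_of_nonneg_right (abs_le.2 ?_) (hρ.2.1 u).le
  constructor <;> nlinarith [sq_nonneg (u i - 1), sq_nonneg (u i + 1)]

lemma integrable_dotProduct_mul (hρ : AdmissibleDensity ρ) (a : Fin G → ℝ) :
    Integrable fun u : E G => (a ⬝ᵥ u.ofLp) * ρ u := by
  simp only [dotProduct, Finset.sum_mul, mul_assoc]
  exact integrable_finsetSum _ fun i _ => (hρ.integrable_apply_mul i).const_mul (a i)

lemma integral_dotProduct_mul (hρ : AdmissibleDensity ρ) (a : Fin G → ℝ) :
    ∫ u : E G, (a ⬝ᵥ u.ofLp) * ρ u = 0 := by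
  simp only [dotProduct, Finset.sum_mul, mul_assoc]
  rw [integral_finsetSum _ fun i _ => (hρ.integrable_apply_mul i).const_mul (a i)]
  simp [integral_const_mul, hρ.2.2.2.1]

lemma integral_dotProduct_mul_dotProduct_mul (hρ : AdmissibleDensity ρ) (a b : Fin G → ℝ) :
    ∫ u : E G, (a ⬝ᵥ u.ofLp) * (b ⬝ᵥ u.ofLp) * ρ u = a ⬝ᵥ b := by
  have hint (i j : Fin G) : Integrable fun u : E G => a i * b j * (u i * u j * ρ u) :=
    (hρ.integrable_apply_mul_apply_mul i j).const_mul _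
  have hexp (u : E G) : (a ⬝ᵥ u.ofLp) * (b ⬝ᵥ u.ofLp) * ρ u =
      ∑ i, ∑ j, a i * b j * (u i * u j * ρ u) := by
    rw [dotProduct, dotProduct, Finset.sum_mul_sum, Finset.sum_mul]
    refine Finset.sum_congr rfl fun i _ => ?_
    rw [Finset.sum_mul]
    exact Finset.sum_congr rfl fun j _ => by ring
  simp_rw [hexp]
  rw [integral_finsetSum _ fun i _ => integrable_finsetSum _ fun j _ => hint i j]
  simp [integral_finsetSum _ fun j _ => hint _ j, integral_const_mul, hρ.2.2.2.2, dotProduct]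

lemma comp_orthogonal (hρ : AdmissibleDensity ρ) {Q : Matrix (Fin G) (Fin G) ℝ}
    (hQ : Q * Qᵀ = 1) : AdmissibleDensity fun v => ρ (mulVecE Qᵀ v) := by
  have hdet : |Q.det| = 1 := by
    rcases mul_self_eq_one_iff.1 (det_mul_self_of_mul_transpose_self hQ) with h | h <;> simp [h]
  have hA : (toEuclideanCLM (𝕜 := ℝ) Q).det ≠ 0 := by simp [det_toEuclideanCLM, ← abs_ne_zero, hdet]
  have hρQ (v : E G) : ρ v = |(toEuclideanCLM (𝕜 := ℝ) Q).det| *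
      ρ (mulVecE Qᵀ (toEuclideanCLM (𝕜 := ℝ) Q v + 0)) := by
    rw [det_toEuclideanCLM, hdet, one_mul, add_zero]
    exact congrArg ρ (mulVecE_transpose_mulVecE hQ v).symm
  have htrans := integral_mul_eq_of_eq_abs_det_mul_comp (μ := volume) hA
    (g := fun v => ρ (mulVecE Qᵀ v)) hρQ
  refine ⟨hρ.1.comp (toEuclideanCLM (𝕜 := ℝ) Qᵀ).contDiff, fun v => hρ.2.1 _, ?_, fun i => ?_,
    fun i j => ?_⟩
  · simpa [hρ.2.2.1] using htrans fun _ => 1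
  · rw [htrans fun v => v i]
    simpa using! hρ.integral_dotProduct_mul (Q i)
  · rw [htrans fun v => v i * v j, ← one_apply, ← hQ]
    simpa using! hρ.integral_dotProduct_mul_dotProduct_mul (Q i) (Q j)

lemma rotation_of_eq_affine {ρ' : E G → ℝ} (hρ : AdmissibleDensity ρ)
    (hρ' : AdmissibleDensity ρ') {Q : Matrix (Fin G) (Fin G) ℝ} (hQ : 0 < Q.det) {C : ℝ} {d : E G}
    (h : ∀ v, ρ v = C * ρ' (mulVecE Q v + d)) : d = 0 ∧ Q * Qᵀ = 1 ∧ Q.det = 1 := by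
  let A := toEuclideanCLM (𝕜 := ℝ) Q
  have hdet : A.det = Q.det := det_toEuclideanCLM Q
  have hA : A.det ≠ 0 := hdet ▸ hQ.ne'
  have hC : C = |A.det| := by
    have h' := hρ'.2.2.1
    have h'' := hρ.2.2.1
    rw [integral_eq_abs_det_mul_integral_comp hA d] at h'
    simp only [h, integral_const_mul] at h''
    exact mul_right_cancel₀ (right_ne_zero_of_mul_eq_one h') (h''.trans h'.symm)
  have htrans := integral_mul_eq_of_eq_abs_det_mul_comp (μ := volume) hA (d := d) (hC ▸ h)
  have hd : d = 0 := by
    ext i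
    calc d i = (∫ v : E G, (Q i ⬝ᵥ v.ofLp) * ρ v) + d i * ∫ v, ρ v := by
          simp [hρ.integral_dotProduct_mul, hρ.2.2.1]
      _ = ∫ v : E G, (A v + d) i * ρ v := by
          rw [← integral_const_mul, ← integral_add (hρ.integrable_dotProduct_mul _)
            (hρ.integrable.const_mul _)]
          exact integral_congr_ae (.of_forall fun v => (add_mul _ _ _).symm)
      _ = 0 := by rw [← htrans fun v => v i, hρ'.2.2.2.1]
  have hQQ : Q * Qᵀ = 1 := by
    ext i j
    calc (Q * Qᵀ) i j = ∫ v : E G, (Q i ⬝ᵥ v.ofLp) * (Q j ⬝ᵥ v.ofLp) * ρ v :=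
          (hρ.integral_dotProduct_mul_dotProduct_mul (Q i) (Q j)).symm
      _ = ∫ v : E G, (A v + d) i * (A v + d) j * ρ v := by rw [hd]; simp only [add_zero]; rfl
      _ = (1 : Matrix (Fin G) (Fin G) ℝ) i j := by
          rw [← htrans fun v => v i * v j, hρ'.2.2.2.2, one_apply]
  refine ⟨hd, hQQ, ?_⟩
  nlinarith [det_mul_self_of_mul_transpose_self hQQ]

end AdmissibleDensity

lemma LocalMaxCondition.exists_isNondegenerateMax {G : ℕ} {ρ : E G → ℝ}
    (hρ : LocalMaxCondition ρ) : ∃ u, IsNondegenerateMax ρ u := by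
  obtain ⟨u, hmax, hdiff, hneg⟩ := hρ
  exact ⟨u, hdiff, hmax.fderiv_eq_zero, fun v hv => by
    simpa [iteratedFDeriv_two_apply] using hneg v hv⟩

section ObservationalEquivalence

variable {G : ℕ} {r₀ rt₀ : E G → E G} {ρ ρt : E G → ℝ}

lemma AdmissibleDensity.exists_density_of_eq_rotation {X : Type*} {r₁ rt₁ : X → E G}
    (hρ : AdmissibleDensity ρ) {Q : Matrix (Fin G) (Fin G) ℝ} (hQ : Q * Qᵀ = 1) (hdet : Q.det = 1)
    (h : ∀ y x, rt₀ y + rt₁ x = mulVecE Q (r₀ y + r₁ x)) :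
    ∃ ρt : E G → ℝ, AdmissibleDensity ρt ∧ ∀ y x,
      ρ (r₀ y + r₁ x) * (fderiv ℝ r₀ y).det = ρt (rt₀ y + rt₁ x) * (fderiv ℝ rt₀ y).det := by
  refine ⟨fun v => ρ (mulVecE Qᵀ v), hρ.comp_orthogonal hQ, fun y x => ?_⟩
  let A := (toEuclideanCLM (𝕜 := ℝ) Q).toContinuousLinearEquivOfDetNeZero
    (by simp [det_toEuclideanCLM, hdet])
  have hA : (A : E G →L[ℝ] E G).det = 1 := by simp [A, det_toEuclideanCLM, hdet]
  have hrt₀ : rt₀ = fun y => A (r₀ y) + (A (r₁ x) - rt₁ x) := funext fun y => by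
    rw [add_sub, ← map_add]
    exact eq_sub_of_add_eq (h y x)
  beta_reduce
  rw [h, mulVecE_transpose_mulVecE hQ, hrt₀, det_fderiv_comp_add, hA, one_mul]

variable {X : Type*} [NormedAddCommGroup X] [NormedSpace ℝ X] [MeasurableSpace X]
  {μ : Measure X} [SFinite μ] [μ.IsOpenPosMeasure] {r₁ rt₁ : X → E G}

theorem exists_rotation_of_ae_eq
    (hr₀ : Continuous r₀) (hr₀bij : Function.Bijective r₀)
    (hr₀inv : LocallyLipschitz (Function.invFun r₀))
    (hr₀det : ∀ᵐ y : E G, DifferentiableAt ℝ r₀ y ∧ 0 < (fderiv ℝ r₀ y).det)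
    (hr₁ : Continuous r₁) (hr₁surj : Function.Surjective r₁)
    (hr₁rank : ∀ᵐ x ∂μ, DifferentiableAt ℝ r₁ x ∧
      LinearMap.rank (fderiv ℝ r₁ x).toLinearMap = (G : Cardinal))
    (hρ : AdmissibleDensity ρ) (hρmax : LocalMaxCondition ρ)
    (hrt₀ : LocallyLipschitz rt₀) (hrt₀bij : Function.Bijective rt₀)
    (hrt₀det : ∀ᵐ y : E G, DifferentiableAt ℝ rt₀ y ∧ 0 < (fderiv ℝ rt₀ y).det)
    (hrt₁ : Continuous rt₁) (hrt₁diff : ∀ᵐ x ∂μ, DifferentiableAt ℝ rt₁ x)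
    (hρt : AdmissibleDensity ρt)
    (h : ∀ᵐ w ∂volume.prod μ, ρ (r₀ w.1 + r₁ w.2) * (fderiv ℝ r₀ w.1).det =
      ρt (rt₀ w.1 + rt₁ w.2) * (fderiv ℝ rt₀ w.1).det) :
    ∃ Q : Matrix (Fin G) (Fin G) ℝ, Q * Qᵀ = 1 ∧ Q.det = 1 ∧
      ∀ y x, rt₀ y + rt₁ x = mulVecE Q (r₀ y + r₁ x) := by
  obtain ⟨u, hu⟩ := hρmax.exists_isNondegenerateMax
  obtain ⟨y₀, ⟨hy, hydet⟩, hty, htydet⟩ := (hr₀det.and hrt₀det).exists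
  obtain ⟨A, hAdet, hA⟩ :=
    exists_hasFDerivAt_comp_invFun hr₀bij hr₀inv.continuous hy hydet hty htydet
  have hfe := separable_of_ae_prod_mul_eq hr₀ hrt₀.continuous hr₁ hrt₁ hρ.1.continuous
    hρt.1.continuous (fun v => (hρt.2.1 v).ne') (hr₀det.mono fun y hy => hy.2.ne')
    (hrt₀det.mono fun y hy => hy.2.ne') h (Function.rightInverse_invFun hr₀bij.2) 0
  have hdense : Dense {x | DifferentiableAt ℝ r₁ x ∧ (fderiv ℝ r₁ x).range = ⊤ ∧
      DifferentiableAt ℝ rt₁ x} := Measure.dense_of_ae (μ := μ) <| by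
    filter_upwards [hr₁rank, hrt₁diff] with x hx htx
    exact ⟨hx.1, range_eq_top_of_rank_eq_finrank (by simp [hx.2]), htx⟩
  have hbij : Function.Bijective (rt₀ ∘ Function.invFun r₀) := hrt₀bij.comp
    ⟨(Function.rightInverse_invFun hr₀bij.2).injective,
      (Function.leftInverse_invFun hr₀bij.1).surjective⟩
  obtain ⟨C, d, haff, hdens⟩ := hu.exists_eq_affine_of_separable hfe
    (hρ.1.differentiable one_ne_zero) hρ.integrable hρ.2.1 hρt.1 hρt.2.1 (hrt₀.comp hr₀inv) hbij hA
    hr₁ hr₁surj hrt₁ hdense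
  obtain ⟨Q, hQ⟩ := EquivLike.surjective (toEuclideanCLM (n := Fin G) (𝕜 := ℝ))
    (A : E G →L[ℝ] E G)
  have hAQ (v : E G) : A v = mulVecE Q v := (DFunLike.congr_fun hQ v).symm
  simp only [hAQ] at haff hdens
  obtain ⟨rfl, hQQ, hQdet⟩ := hρ.rotation_of_eq_affine hρt
    (by rwa [← hQ, det_toEuclideanCLM] at hAdet) hdens
  refine ⟨Q, hQQ, hQdet, fun y x => ?_⟩
  simpa [Function.leftInverse_invFun hr₀bij.1 y] using haff (r₀ y) x

theorem sem_identification_general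
    (hr₀ : Continuous r₀) (hr₀bij : Function.Bijective r₀)
    (hr₀inv : LocallyLipschitz (Function.invFun r₀))
    (hr₀det : ∀ᵐ y : E G, DifferentiableAt ℝ r₀ y ∧ 0 < (fderiv ℝ r₀ y).det)
    (hr₁ : Continuous r₁) (hr₁surj : Function.Surjective r₁)
    (hr₁rank : ∀ᵐ x ∂μ, DifferentiableAt ℝ r₁ x ∧
      LinearMap.rank (fderiv ℝ r₁ x).toLinearMap = (G : Cardinal))
    (hρ : AdmissibleDensity ρ) (hρmax : LocalMaxCondition ρ)
    (hrt₀ : LocallyLipschitz rt₀) (hrt₀bij : Function.Bijective rt₀)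
    (hrt₀det : ∀ᵐ y : E G, DifferentiableAt ℝ rt₀ y ∧ 0 < (fderiv ℝ rt₀ y).det)
    (hrt₁ : Continuous rt₁) (hrt₁diff : ∀ᵐ x ∂μ, DifferentiableAt ℝ rt₁ x) :
    (∃ ρt : E G → ℝ, AdmissibleDensity ρt ∧
        ∀ᵐ w ∂volume.prod μ, ρ (r₀ w.1 + r₁ w.2) * (fderiv ℝ r₀ w.1).det
          = ρt (rt₀ w.1 + rt₁ w.2) * (fderiv ℝ rt₀ w.1).det)
      ↔ ∃ Q : Matrix (Fin G) (Fin G) ℝ, Q * Qᵀ = 1 ∧ Q.det = 1 ∧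
          ∀ y x, rt₀ y + rt₁ x = mulVecE Q (r₀ y + r₁ x) := by
  constructor
  · rintro ⟨ρt, hρt, h⟩
    exact exists_rotation_of_ae_eq hr₀ hr₀bij hr₀inv hr₀det hr₁ hr₁surj hr₁rank hρ hρmax hrt₀
      hrt₀bij hrt₀det hrt₁ hrt₁diff hρt h
  · rintro ⟨Q, hQ, hdet, h⟩
    obtain ⟨ρt, hρt, heq⟩ := hρ.exists_density_of_eq_rotation hQ hdet h
    exact ⟨ρt, hρt, .of_forall fun w => heq w.1 w.2⟩

end ObservationalEquivalence

/-- **Observational equivalence in the separable nonlinear SEM** (Theorem `thm:matzkin`):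
`(r̃₀, r̃₁, f_Ũ)` is observationally equivalent to `(r₀, r₁, f_U)` for some admissible
density `f_Ũ` if and only if `r̃₀(y) + r̃₁(x) = Q(r₀(y) + r₁(x))` for some `Q ∈ SO(G)`. -/
theorem sem_identification
    (G K : ℕ) (hG : 1 ≤ G) (hGK : G ≤ K)
    (r₀ : E G → E G) (hr₀lip : LocallyLipschitz r₀) (hr₀bij : Function.Bijective r₀)
    (hr₀inv : LocallyLipschitz (Function.invFun r₀))
    (hr₀det : ∀ᵐ y : E G, DifferentiableAt ℝ r₀ y ∧ 0 < (fderiv ℝ r₀ y).det)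
    (r₁ : E K → E G) (hr₁lip : LocallyLipschitz r₁) (hr₁surj : Function.Surjective r₁)
    (hr₁rank : ∀ᵐ x : E K, DifferentiableAt ℝ r₁ x ∧
      LinearMap.rank (fderiv ℝ r₁ x).toLinearMap = (G : Cardinal))
    (fU : E G → ℝ) (hfU : AdmissibleDensity fU) (hfUmax : LocalMaxCondition fU)
    (rt₀ : E G → E G) (hrt₀lip : LocallyLipschitz rt₀) (hrt₀bij : Function.Bijective rt₀)
    (hrt₀det : ∀ᵐ y : E G, DifferentiableAt ℝ rt₀ y ∧ 0 < (fderiv ℝ rt₀ y).det)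
    (rt₁ : E K → E G) (hrt₁lip : LocallyLipschitz rt₁) :
    (∃ fUt : E G → ℝ, AdmissibleDensity fUt ∧
        ∀ᵐ w : E G × E K,
          fU (r₀ w.1 + r₁ w.2) * (fderiv ℝ r₀ w.1).det
            = fUt (rt₀ w.1 + rt₁ w.2) * (fderiv ℝ rt₀ w.1).det)
      ↔ ∃ Q : Matrix (Fin G) (Fin G) ℝ, Q * Qᵀ = 1 ∧ Q.det = 1 ∧
          ∀ (y : E G) (x : E K), rt₀ y + rt₁ x = mulVecE Q (r₀ y + r₁ x) := by
  exact sem_identification_general (μ := volume) hr₀lip.continuous hr₀bij hr₀inv hr₀det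
    hr₁lip.continuous hr₁surj hr₁rank hfU hfUmax hrt₀lip hrt₀bij hrt₀det hrt₁lip.continuous
    (ae_differentiableAt_of_locallyLipschitz volume hrt₁lip)
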